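/- arXiv:2601.08359 — 3 statements merged into one kernel-verified Lean document; each statement's English description precedes it below -/
import Mathlib

section
/- For every δ ∈ [1/2, 1] there exist sets W, Wᴵ, Wᴵᴵ ⊆ ⟦𝕐⟧ such that dim_H(W) = dim_H(Wᴵ) = dim_H(Wᴵᴵ) = δ, neither player has a winning strategy in the binary Gale–Stewart game with target set W, Player I has a winning strategy in the game with target set Wᴵ, and Player II has a winning strategy in the game with target set Wᴵᴵ. -/
open Metric Set Filter MeasureTheory

noncomputable local instance : MetricSpace (ℕ → Bool) := PiNat.metricSpace

/-- The finite prefix `⟨x 0, …, x (n-1)⟩` of a play. -/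
def prefixList (x : ℕ → Bool) (n : ℕ) : List Bool := List.ofFn fun i : Fin n => x i

/-- `x` is a play consistent with the Player I pure strategy `sI`. -/
def ConsistentI (sI : List Bool → Bool) (x : ℕ → Bool) : Prop :=
  ∀ n : ℕ, Even n → x n = sI (prefixList x n)

/-- `x` is a play consistent with the Player II pure strategy `sII`. -/
def ConsistentII (sII : List Bool → Bool) (x : ℕ → Bool) : Prop :=
  ∀ n : ℕ, Odd n → x n = sII (prefixList x n)

/-! The sequences vanishing outside a set `A ⊆ ℕ` of density `δ` form a set of Hausdorff dimension
`δ`: their prefixes of length `n` number `2 ^ |A ∩ [0, n)|`, and reading off the digits at the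
positions in `A` is a Hölder map onto the unit interval for any exponent below `δ`.

For `δ ∈ [1/2, 1]` choose such an `A` containing all odd numbers and infinitely many even ones.
Player I wins on the sequences vanishing outside `A` by always playing `0`. Removing the position
`1` from `A` does not change the density, and Player II then wins by playing `1` there. The
undetermined set lies between these two sets, hence has the same dimension. Every strategy of
Player I has continuum many consistent plays outside the smaller set, and every strategy of
Player II has continuum many inside the larger one. As there are only continuum many strategies,
one can choose, as in Bernstein's construction, pairwise distinct witnesses against all of them,
adding those against Player II to the smaller set and leaving out those against Player I.
-/

open scoped Cardinal ENNReal NNReal Topology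

universe u

theorem exists_injective_forall_mem {ι α : Type u} (S : ι → Set α) (h : ∀ i, #ι ≤ #(S i)) :
    ∃ f : ι → α, Function.Injective f ∧ ∀ i, f i ∈ S i := by
  obtain ⟨_, _, hord⟩ := Cardinal.exists_ord_eq_type_lt ι
  have exists_fresh (i : ι) (g : ∀ j, j < i → α) : ∃ a ∈ S i, ∀ j (hj : j < i), g j hj ≠ a := by
    by_contra! hcon
    have hsub : S i ⊆ range fun j : Iio i => g j.1 j.2 := fun a ha =>
      let ⟨j, hj, hja⟩ := hcon a ha
      ⟨⟨j, hj⟩, hja⟩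
    refine (h i).not_gt ?_
    calc #(S i) ≤ #(range fun j : Iio i => g j.1 j.2) := Cardinal.mk_le_mk_of_subset hsub
      _ ≤ #(Iio i) := Cardinal.mk_range_le
      _ < #ι := Cardinal.mk_Iio_lt i hord
  choose F hFS hF using exists_fresh
  let f : ι → α := wellFounded_lt.fix F
  have hf (i : ι) : f i = F i fun j _ => f j := WellFounded.fix_eq _ _ _
  have hne {i j : ι} (hji : j < i) : f j ≠ f i := by
    rw [hf i]
    exact hF i (fun j _ => f j) j hji
  refine ⟨f, fun i j hij => ?_, fun i => hf i ▸ hFS i _⟩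
  rcases lt_trichotomy i j with hlt | heq | hgt
  · exact absurd hij (hne hlt)
  · exact heq
  · exact absurd hij.symm (hne hgt)

/-- Player I has a winning strategy in the binary Gale–Stewart game with target set `W`. -/
def PlayerIWins (W : Set (ℕ → Bool)) : Prop :=
  ∃ sI : List Bool → Bool, ∀ x, ConsistentI sI x → x ∈ W

/-- Player II has a winning strategy in the binary Gale–Stewart game with target set `W`. -/
def PlayerIIWins (W : Set (ℕ → Bool)) : Prop :=
  ∃ sII : List Bool → Bool, ∀ x, ConsistentII sII x → x ∉ W

@[simp]
theorem length_prefixList (x : ℕ → Bool) (n : ℕ) : (prefixList x n).length = n :=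
  List.length_ofFn

theorem prefixList_succ (x : ℕ → Bool) (n : ℕ) :
    prefixList x (n + 1) = prefixList x n ++ [x n] :=
  List.ofFn_succ_last

theorem exists_play_forall_eq (r : List Bool → Bool) :
    ∃ x : ℕ → Bool, ∀ n, x n = r (prefixList x n) := by
  let history : ℕ → List Bool := fun n => Nat.rec [] (fun _ l => l ++ [r l]) n
  have prefixList_eq (n : ℕ) : prefixList (fun n => r (history n)) n = history n := by
    induction n with
    | zero => rfl
    | succ n ih => rw [prefixList_succ, ih]
  exact ⟨fun n => r (history n), fun n => by rw [prefixList_eq]⟩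

theorem continuum_le_mk_plays (r : List Bool → Bool) {F : Set ℕ} (hF : F.Infinite) :
    𝔠 ≤ #{x : ℕ → Bool | ∀ n ∉ F, x n = r (prefixList x n)} := by
  classical
  have := hF.to_subtype
  choose play hplay using fun b : F → Bool =>
    exists_play_forall_eq fun l => if h : l.length ∈ F then b ⟨l.length, h⟩ else r l
  simp only [length_prefixList] at hplay
  have hcard : #(F → Bool) = 𝔠 := by simp
  rw [← hcard]
  refine Cardinal.mk_le_of_injective (f := fun b => ⟨play b, fun n hn => ?_⟩) fun b c hbc => ?_
  · rw [hplay b n, dif_neg hn]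
  · funext ⟨n, hn⟩
    have h := congrFun (Subtype.ext_iff.1 hbc) n
    simpa only [hplay b n, hplay c n, dif_pos hn] using h

theorem continuum_le_mk_consistentI (sI : List Bool → Bool) {m : ℕ} (hm : Odd m) (b : Bool) :
    𝔠 ≤ #{x | ConsistentI sI x ∧ x m = b} := by
  have hfree : ({n | Odd n} \ {m}).Infinite :=
    (infinite_of_injective_forall_mem (s := {n | Odd n}) (f := fun n : ℕ => 2 * n + 1)
      (fun a b hab => by simpa using hab) fun n => ⟨n, rfl⟩).sdiff (finite_singleton m)
  refine (continuum_le_mk_plays (fun l => if Even l.length then sI l else b) hfree).trans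
    (Cardinal.mk_le_mk_of_subset fun x hx => ⟨fun n hn => ?_, ?_⟩)
  · simpa [hn] using hx n fun h => Nat.not_odd_iff_even.2 hn h.1
  · simpa [Nat.not_even_iff_odd.2 hm] using hx m fun h => h.2 rfl

/-- The binary sequences that vanish outside `A`. -/
def supportedIn (A : Set ℕ) : Set (ℕ → Bool) := {x | ∀ n ∉ A, x n = false}

theorem supportedIn_mono {A B : Set ℕ} (h : A ⊆ B) : supportedIn A ⊆ supportedIn B :=
  fun _ hx n hn => hx n fun hA => hn (h hA)

theorem continuum_le_mk_consistentII (sII : List Bool → Bool) {A : Set ℕ}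
    (hodd : ∀ n, Odd n → n ∈ A) (heven : {n ∈ A | Even n}.Infinite) :
    𝔠 ≤ #{x | ConsistentII sII x ∧ x ∈ supportedIn A} := by
  refine (continuum_le_mk_plays (fun l => if Odd l.length then sII l else false) heven).trans
    (Cardinal.mk_le_mk_of_subset fun x hx => ⟨fun n hn => ?_, fun n hn => ?_⟩)
  · simpa [hn] using hx n fun h => Nat.not_even_iff_odd.2 hn h.2
  · simpa [mt (hodd n) hn] using hx n fun h => hn h.1

theorem playerIWins_supportedIn {A : Set ℕ} (hodd : ∀ n, Odd n → n ∈ A) :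
    PlayerIWins (supportedIn A) :=
  ⟨fun _ => false, fun _ hx n hn => hx n (Nat.not_odd_iff_even.1 (mt (hodd n) hn))⟩

theorem playerIIWins_supportedIn {A : Set ℕ} {m : ℕ} (hm : Odd m) (hmA : m ∉ A) :
    PlayerIIWins (supportedIn A) :=
  ⟨fun _ => true, fun _ hx hxA => Bool.noConfusion ((hx m hm).symm.trans (hxA m hmA))⟩

theorem exists_undetermined_between {L U : Set (ℕ → Bool)} (hLU : L ⊆ U)
    (hI : ∀ sI, 𝔠 ≤ #{x | ConsistentI sI x ∧ x ∉ L})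
    (hII : ∀ sII, 𝔠 ≤ #{x | ConsistentII sII x ∧ x ∈ U}) :
    ∃ W, L ⊆ W ∧ W ⊆ U ∧ ¬ PlayerIWins W ∧ ¬ PlayerIIWins W := by
  let S : (List Bool → Bool) ⊕ (List Bool → Bool) → Set (ℕ → Bool) :=
    Sum.elim (fun sI => {x | ConsistentI sI x ∧ x ∉ L}) fun sII => {x | ConsistentII sII x ∧ x ∈ U}
  have hS (i) : #((List Bool → Bool) ⊕ (List Bool → Bool)) ≤ #(S i) := by
    rw [show #((List Bool → Bool) ⊕ (List Bool → Bool)) = 𝔠 by simp]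
    exact i.rec hI hII
  obtain ⟨f, hinj, hf⟩ := exists_injective_forall_mem S hS
  refine ⟨L ∪ range fun sII => f (.inr sII), subset_union_left, union_subset hLU ?_, ?_, ?_⟩
  · rintro _ ⟨sII, rfl⟩
    exact (hf (.inr sII)).2
  · rintro ⟨sI, hwin⟩
    obtain ⟨hcons, hL⟩ : ConsistentI sI (f (.inl sI)) ∧ f (.inl sI) ∉ L := hf (.inl sI)
    rcases hwin _ hcons with h | ⟨sII, h⟩
    · exact hL h
    · exact Sum.inr_ne_inl (hinj h)
  · rintro ⟨sII, hwin⟩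
    exact hwin _ (hf (.inr sII)).1 (.inr ⟨sII, rfl⟩)

theorem dimH_le_of_frequently_card_mul_rpow_le {X : Type*} [EMetricSpace X] {s : Set X}
    {ι : ℕ → Type*} [∀ n, Fintype (ι n)] (t : ∀ n, ι n → Set X) {r : ℕ → ℝ≥0∞}
    (hr : Tendsto r atTop (𝓝 0)) (hdiam : ∀ n i, ediam (t n i) ≤ r n)
    (hcover : ∀ n, s ⊆ ⋃ i, t n i) {d : ℝ≥0} {C : ℝ≥0∞} (hC : C ≠ ∞)
    (hcard : ∃ᶠ n in atTop, Fintype.card (ι n) * r n ^ (d : ℝ) ≤ C) : dimH s ≤ d := by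
  borelize X
  refine dimH_le_of_hausdorffMeasure_ne_top (ne_top_of_le_ne_top hC ?_)
  refine (Measure.hausdorffMeasure_le_liminf_sum d s r hr t (.of_forall hdiam)
    (.of_forall hcover)).trans (liminf_le_of_frequently_le' (hcard.mono fun n hn => ?_))
  calc ∑ i, ediam (t n i) ^ (d : ℝ) ≤ ∑ _ : ι n, r n ^ (d : ℝ) := by
        gcongr with i
        exact hdiam n i
    _ = Fintype.card (ι n) * r n ^ (d : ℝ) := by simp
    _ ≤ C := hn

theorem edist_eq_of_ne {x y : ℕ → Bool} (h : x ≠ y) : edist x y = 2⁻¹ ^ PiNat.firstDiff x y := by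
  rw [edist_dist, PiNat.dist_eq_of_ne h, ENNReal.ofReal_pow (by positivity), one_div,
    ENNReal.ofReal_inv_of_pos two_pos, ENNReal.ofReal_ofNat]

theorem ediam_cylinder_le (x : ℕ → Bool) (n : ℕ) : ediam (PiNat.cylinder x n) ≤ 2⁻¹ ^ n := by
  refine ediam_le fun y hy z hz => ?_
  rcases eq_or_ne y z with rfl | hyz
  · simp
  · have hfirst : n ≤ PiNat.firstDiff y z :=
      (PiNat.mem_cylinder_iff_le_firstDiff hyz n).1 fun i hi => (hy i hi).trans (hz i hi).symm
    rw [edist_eq_of_ne hyz]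
    exact pow_le_pow_right_of_le_one' (ENNReal.inv_le_one.2 one_le_two) hfirst

theorem holderWith_of_forall_mem_cylinder {Y : Type*} [PseudoEMetricSpace Y] {f : (ℕ → Bool) → Y}
    {C d : ℝ≥0}
    (h : ∀ n x, ∀ y ∈ PiNat.cylinder x n, edist (f x) (f y) ≤ C * (2⁻¹ ^ n) ^ (d : ℝ)) :
    HolderWith C d f := by
  intro x y
  rcases eq_or_ne x y with rfl | hxy
  · simp
  · rw [edist_eq_of_ne hxy]
    exact h _ x y ((PiNat.mem_cylinder_comm _ _ _).1 (PiNat.mem_cylinder_firstDiff x y))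

theorem infinite_of_forall_exists_lt_count {A : Set ℕ} [DecidablePred (· ∈ A)]
    (h : ∀ N, ∃ n, N < Nat.count (· ∈ A) n) : A.Infinite := fun hA =>
  let ⟨n, hn⟩ := h hA.toFinset.card
  (Nat.count_le_card (p := (· ∈ A)) hA n).not_gt hn

open scoped Classical in
/-- The set `A ⊆ ℕ` has natural (asymptotic) density `δ`. -/
def HasDensity (A : Set ℕ) (δ : ℝ) : Prop :=
  Tendsto (fun n : ℕ => (Nat.count (· ∈ A) n : ℝ) / n) atTop (𝓝 δ)

theorem hasDensity_iff {A : Set ℕ} [DecidablePred (· ∈ A)] {δ : ℝ} :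
    HasDensity A δ ↔ Tendsto (fun n : ℕ => (Nat.count (· ∈ A) n : ℝ) / n) atTop (𝓝 δ) := by
  unfold HasDensity
  congr!

theorem HasDensity.diff_finite {A F : Set ℕ} {δ : ℝ} (hA : HasDensity A δ) (hF : F.Finite) :
    HasDensity (A \ F) δ := by
  classical
  have count_le (n : ℕ) :
      Nat.count (· ∈ A) n ≤ Nat.count (· ∈ A \ F) n + hF.toFinset.card := by
    simp only [Nat.count_eq_card_filter_range]
    refine (Finset.card_le_card fun i hi => ?_).trans (Finset.card_union_le _ _)
    by_cases hiF : i ∈ F <;> simp_all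
  have hlim : Tendsto (fun n : ℕ => (Nat.count (· ∈ A) n : ℝ) / n - hF.toFinset.card / n)
      atTop (𝓝 δ) := by
    simpa using hA.sub (tendsto_const_div_atTop_nhds_zero_nat (hF.toFinset.card : ℝ))
  refine hasDensity_iff.2
    (tendsto_of_tendsto_of_tendsto_of_le_of_le hlim hA (fun n => ?_) fun n => ?_)
  · have : (Nat.count (· ∈ A) n : ℝ) ≤ Nat.count (· ∈ A \ F) n + hF.toFinset.card :=
      mod_cast count_le n
    dsimp only
    rw [← sub_div]
    gcongr
    exact sub_le_iff_le_add.2 this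
  · dsimp only
    gcongr
    exact sdiff_subset

theorem count_setOf_lt_succ {f : ℕ → ℕ} (h0 : f 0 = 0) (hmono : Monotone f)
    (hstep : ∀ n, f (n + 1) ≤ f n + 1) [DecidablePred (· ∈ {n | f n < f (n + 1)})] (n : ℕ) :
    Nat.count (· ∈ {n | f n < f (n + 1)}) n = f n := by
  induction n with
  | zero => simp [h0]
  | succ n ih =>
    rw [Nat.count_succ, ih]
    have hle : f n ≤ f (n + 1) := hmono n.le_succ
    have hle_succ := hstep n
    simp only [mem_ofPred_eq]
    split_ifs <;> omega

theorem tendsto_natSqrt_div_atTop : Tendsto (fun n : ℕ => (Nat.sqrt n : ℝ) / n) atTop (𝓝 0) := by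
  have hsqrt : Tendsto (fun n : ℕ => (√(n : ℝ))⁻¹) atTop (𝓝 0) :=
    (Real.tendsto_sqrt_atTop.comp tendsto_natCast_atTop_atTop).inv_tendsto_atTop
  refine squeeze_zero (fun _ => by positivity) (fun n => ?_) hsqrt
  rw [← one_div, ← Real.sqrt_div_self']
  gcongr
  exact Real.nat_sqrt_le_real_sqrt

theorem exists_infinite_hasDensity {t : ℝ} (ht : t ∈ Icc (0 : ℝ) 1) :
    ∃ S : Set ℕ, S.Infinite ∧ HasDensity S t := by
  classical
  -- `S` is the set of jumps of `f`; the square root makes `S` infinite even when `t = 0`.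
  let f (n : ℕ) : ℕ := max ⌊t * n⌋₊ n.sqrt
  have hmono : Monotone f := fun m n hmn =>
    max_le_max (Nat.floor_mono (by have := ht.1; gcongr)) (Nat.sqrt_le_sqrt hmn)
  have hstep (n : ℕ) : f (n + 1) ≤ f n + 1 := by
    have hfloor : ⌊t * (n + 1 : ℕ)⌋₊ ≤ ⌊t * n⌋₊ + 1 := by
      rw [← Nat.floor_add_one (mul_nonneg ht.1 n.cast_nonneg)]
      refine Nat.floor_mono ?_
      push_cast
      linarith [ht.2]
    have hsqrt := n.sqrt_succ_le_succ_sqrt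
    grind
  have hcount := count_setOf_lt_succ (f := f) (by simp [f]) hmono hstep
  refine ⟨{n | f n < f (n + 1)}, infinite_of_forall_exists_lt_count fun N => ?_, ?_⟩
  · refine ⟨(N + 1) ^ 2, ?_⟩
    rw [hcount]
    exact lt_max_of_lt_right (by simp)
  · rw [hasDensity_iff]
    have hlim := ((tendsto_nat_floor_mul_div_atTop ht.1).comp
      (tendsto_natCast_atTop_atTop (R := ℝ))).max tendsto_natSqrt_div_atTop
    rw [max_eq_left ht.1] at hlim
    refine hlim.congr fun n => ?_
    rw [hcount, Nat.cast_max, ← max_div_div_right n.cast_nonneg, Function.comp_apply]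

theorem count_odd_or_half_mem (S : Set ℕ) [DecidablePred (· ∈ S)] (n : ℕ) :
    Nat.count (fun k => Odd k ∨ k / 2 ∈ S) n = n / 2 + Nat.count (· ∈ S) ((n + 1) / 2) := by
  induction n with
  | zero => simp
  | succ n ih =>
    rw [Nat.count_succ, ih]
    rcases Nat.even_or_odd' n with ⟨k, rfl | rfl⟩
    · rw [show (2 * k + 1 + 1) / 2 = k + 1 by omega, show (2 * k + 1) / 2 = k by omega,
        Nat.count_succ]
      have : ¬ Odd (2 * k) := by simp
      simp [this, add_assoc]
    · rw [show (2 * k + 1 + 1 + 1) / 2 = k + 1 by omega, show (2 * k + 1 + 1) / 2 = k + 1 by omega,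
        show (2 * k + 1) / 2 = k by omega]
      simp [add_right_comm]

theorem HasDensity.odd_or_half_mem {S : Set ℕ} {t : ℝ} (hS : HasDensity S t) :
    HasDensity {n | Odd n ∨ n / 2 ∈ S} ((1 + t) / 2) := by
  classical
  have hhalf : Tendsto (fun n : ℕ => ((n / 2 : ℕ) : ℝ) / n) atTop (𝓝 (1 / 2)) := by
    refine ((tendsto_nat_floor_mul_div_atTop (R := ℝ) one_half_pos.le).comp
      tendsto_natCast_atTop_atTop).congr fun n => ?_
    have hfloor : ⌊(1 / 2 : ℝ) * n⌋₊ = n / 2 := by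
      rw [one_div_mul_eq_div]
      exact Nat.floor_div_eq_div n 2
    simp only [Function.comp_apply, hfloor]
  have hhalf' : Tendsto (fun n : ℕ => (((n + 1) / 2 : ℕ) : ℝ) / n) atTop (𝓝 (1 / 2)) := by
    have hlim := hhalf.const_sub 1
    rw [sub_half] at hlim
    refine hlim.congr' ?_
    filter_upwards [eventually_ne_atTop 0] with n hn
    have hsplit : ((n / 2 : ℕ) : ℝ) + ((n + 1) / 2 : ℕ) = n := by
      exact_mod_cast (show n / 2 + (n + 1) / 2 = n by omega)
    field_simp
    linarith
  have hindex : Tendsto (fun n : ℕ => (n + 1) / 2) atTop atTop :=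
    (Nat.tendsto_div_const_atTop two_ne_zero).comp (tendsto_add_atTop_nat 1)
  have hlim := hhalf.add ((hS.comp hindex).mul hhalf')
  rw [mul_one_div, ← add_div] at hlim
  refine hasDensity_iff.2 (hlim.congr' ?_)
  filter_upwards [eventually_ne_atTop 0] with n hn
  have hindex_ne : (((n + 1) / 2 : ℕ) : ℝ) ≠ 0 := Nat.cast_ne_zero.2 (by omega)
  rw [Function.comp_apply, div_mul_div_cancel₀ hindex_ne, count_odd_or_half_mem, Nat.cast_add,
    add_div]

theorem exists_hasDensity_odd_mem {δ : ℝ} (hδ : δ ∈ Icc (1 / 2 : ℝ) 1) :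
    ∃ A : Set ℕ, HasDensity A δ ∧ (∀ n, Odd n → n ∈ A) ∧ {n ∈ A | Even n}.Infinite := by
  obtain ⟨S, hinf, hS⟩ := exists_infinite_hasDensity (t := 2 * δ - 1)
    ⟨by linarith [hδ.1], by linarith [hδ.2]⟩
  refine ⟨{n | Odd n ∨ n / 2 ∈ S}, ?_, fun n hn => .inl hn, ?_⟩
  · simpa using hS.odd_or_half_mem
  · refine (hinf.image (f := (2 * ·)) fun a _ b _ hab => by simpa using hab).mono ?_
    rintro _ ⟨k, hk, rfl⟩
    exact ⟨.inr (by simpa using hk), even_two_mul k⟩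

/-- The real number in `[0, 1]` whose binary digits are the entries of `x` at the positions in
`A`, taken in increasing order. -/
noncomputable def binaryValueOn (A : Set ℕ) (x : ℕ → Bool) : ℝ :=
  Real.ofDigits fun k => finTwoEquiv.symm (x (Nat.nth (· ∈ A) k))

theorem surjOn_binaryValueOn {A : Set ℕ} (hA : A.Infinite) :
    SurjOn (binaryValueOn A) (supportedIn A) (Icc 0 1) := by
  classical
  intro y hy
  obtain ⟨digits, -, rfl⟩ := Real.ofDigits_SurjOn one_lt_two hy
  refine ⟨fun n => if n ∈ A then finTwoEquiv (digits (Nat.count (· ∈ A) n)) else false,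
    fun n hn => if_neg hn, congrArg Real.ofDigits (funext fun k => ?_)⟩
  have hk : Nat.nth (· ∈ A) k ∈ A := Nat.nth_mem_of_infinite hA k
  have hcount : Nat.count (· ∈ A) (Nat.nth (· ∈ A) k) = k :=
    Nat.count_nth_of_infinite (p := (· ∈ A)) hA k
  simp only [if_pos hk, hcount, Equiv.symm_apply_apply]

section Dimension

variable {A : Set ℕ} [DecidablePred (· ∈ A)] {d : ℝ≥0}

theorem dimH_supportedIn_le (h : ∃ᶠ n : ℕ in atTop, (Nat.count (· ∈ A) n : ℝ) ≤ d * n) :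
    dimH (supportedIn A) ≤ d := by
  let ones (x : ℕ → Bool) (n : ℕ) : Finset ℕ := {i ∈ Finset.range n | x i = true}
  refine dimH_le_of_frequently_card_mul_rpow_le
    (ι := fun n => ({i ∈ Finset.range n | i ∈ A} : Finset ℕ).powerset)
    (fun n S => PiNat.cylinder (fun i => decide (i ∈ S.1)) n)
    (ENNReal.tendsto_pow_atTop_nhds_zero_of_lt_one (r := 2⁻¹) (by simp))
    (fun n S => ediam_cylinder_le _ n) (fun n x hx => mem_iUnion.2 ⟨⟨ones x n, ?_⟩, ?_⟩)
    ENNReal.one_ne_top (h.mono fun n hn => ?_)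
  · refine Finset.mem_powerset.2 (Finset.monotone_filter_right _ fun i _ hi => ?_)
    by_contra hiA
    exact Bool.noConfusion (hi.symm.trans (hx i hiA))
  · intro i hi
    simp [ones, hi]
  · calc (Fintype.card ({i ∈ Finset.range n | i ∈ A} : Finset ℕ).powerset : ℝ≥0∞)
          * (2⁻¹ ^ n) ^ (d : ℝ)
        = 2 ^ (Nat.count (· ∈ A) n : ℝ) * 2 ^ (-(d * n : ℝ)) := by
          rw [Fintype.card_coe, Finset.card_powerset, ← Nat.count_eq_card_filter_range,
            ENNReal.rpow_natCast, ENNReal.rpow_neg, mul_comm (d : ℝ), ENNReal.rpow_mul,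
            ENNReal.rpow_natCast, ← ENNReal.inv_rpow, ENNReal.inv_pow, Nat.cast_pow,
            Nat.cast_ofNat]
      _ ≤ 2 ^ (d * n : ℝ) * 2 ^ (-(d * n : ℝ)) := by
          gcongr
          exact one_le_two
      _ = 1 := by
          rw [← ENNReal.rpow_add _ _ two_ne_zero ENNReal.ofNat_ne_top, add_neg_cancel,
            ENNReal.rpow_zero]

theorem edist_binaryValueOn_le {x y : ℕ → Bool} {n : ℕ} (h : y ∈ PiNat.cylinder x n) :
    edist (binaryValueOn A x) (binaryValueOn A y) ≤ 2⁻¹ ^ Nat.count (· ∈ A) n := by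
  have hagree (k : ℕ) (hk : k < Nat.count (· ∈ A) n) :
      finTwoEquiv.symm (x (Nat.nth (· ∈ A) k)) = finTwoEquiv.symm (y (Nat.nth (· ∈ A) k)) := by
    rw [h _ (Nat.nth_lt_of_lt_count hk)]
  rw [edist_dist, Real.dist_eq]
  refine (ENNReal.ofReal_le_ofReal (Real.abs_ofDigits_sub_ofDigits_le hagree)).trans_eq ?_
  rw [ENNReal.ofReal_inv_of_pos (by positivity), ENNReal.ofReal_pow (by positivity),
    ENNReal.inv_pow]
  simp

theorem holderWith_binaryValueOn {c : ℕ} (h : ∀ n : ℕ, (d * n : ℝ) ≤ Nat.count (· ∈ A) n + c) :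
    HolderWith (2 ^ c) d (binaryValueOn A) := by
  refine holderWith_of_forall_mem_cylinder fun n x y hy => ?_
  calc edist (binaryValueOn A x) (binaryValueOn A y)
      ≤ 2⁻¹ ^ Nat.count (· ∈ A) n := edist_binaryValueOn_le hy
    _ = 2 ^ c * 2⁻¹ ^ (Nat.count (· ∈ A) n + c : ℝ) := by
        rw [← Nat.cast_add, ENNReal.rpow_natCast, pow_add, mul_left_comm, ← mul_pow,
          ENNReal.mul_inv_cancel two_ne_zero ENNReal.ofNat_ne_top, one_pow, mul_one]
    _ ≤ 2 ^ c * 2⁻¹ ^ (d * n : ℝ) := by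
        gcongr 2 ^ c * ?_
        exact ENNReal.rpow_le_rpow_of_exponent_ge (ENNReal.inv_le_one.2 one_le_two) (h n)
    _ = (2 ^ c : ℝ≥0) * (2⁻¹ ^ n) ^ (d : ℝ) := by
        rw [mul_comm (d : ℝ), ENNReal.rpow_mul, ENNReal.rpow_natCast]
        push_cast
        rfl

theorem le_dimH_supportedIn (hd : 0 < d) {c : ℕ}
    (h : ∀ n : ℕ, (d * n : ℝ) ≤ Nat.count (· ∈ A) n + c) : d ≤ dimH (supportedIn A) := by
  have hinf : A.Infinite := infinite_of_forall_exists_lt_count fun N => by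
    obtain ⟨n, hn⟩ := exists_nat_gt ((N + c : ℝ) / d)
    refine ⟨n, ?_⟩
    rw [div_lt_iff₀' (by positivity)] at hn
    exact_mod_cast lt_of_add_lt_add_right (hn.trans_le (h n))
  have hunit : dimH (Icc (0 : ℝ) 1) = 1 := by
    rw [Real.dimH_of_nonempty_interior (by simp), Module.finrank_self, Nat.cast_one]
  have hdim : 1 ≤ dimH (supportedIn A) / d :=
    calc 1 = dimH (Icc (0 : ℝ) 1) := hunit.symm
      _ ≤ dimH (binaryValueOn A '' supportedIn A) := dimH_mono (surjOn_binaryValueOn hinf)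
      _ ≤ dimH (supportedIn A) / d := (holderWith_binaryValueOn h).dimH_image_le hd _
  rwa [ENNReal.le_div_iff_mul_le (.inl (by positivity)) (.inl ENNReal.coe_ne_top), one_mul] at hdim

end Dimension

theorem HasDensity.dimH_supportedIn {A : Set ℕ} {δ : ℝ} (hA : HasDensity A δ) :
    dimH (supportedIn A) = ENNReal.ofReal δ := by
  classical
  refine le_antisymm (le_of_forall_gt_imp_ge_of_dense fun a ha => ?_)
    (ENNReal.le_of_forall_nnreal_lt fun d hd => ?_)
  · obtain ⟨d, hδd, hda⟩ := ENNReal.lt_iff_exists_nnreal_btwn.1 ha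
    have hδd' : δ < d := (Real.le_coe_toNNReal δ).trans_lt (ENNReal.coe_lt_coe.1 hδd)
    refine (dimH_supportedIn_le (Eventually.frequently ?_)).trans hda.le
    filter_upwards [hA.eventually_lt_const hδd', eventually_gt_atTop 0] with n hn hpos
    exact ((div_lt_iff₀ (by positivity)).1 hn).le
  · rcases eq_zero_or_pos d with rfl | hpos
    · simp
    rw [ENNReal.ofReal, ENNReal.coe_lt_coe, Real.lt_toNNReal_iff_coe_lt] at hd
    have heventually : ∀ᶠ n : ℕ in atTop, (d * n : ℝ) ≤ Nat.count (· ∈ A) n := by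
      filter_upwards [hA.eventually_const_lt hd, eventually_gt_atTop 0] with n hn hpos
      exact ((lt_div_iff₀ (by positivity)).1 hn).le
    obtain ⟨N, hN⟩ := eventually_atTop.1 heventually
    refine le_dimH_supportedIn hpos (c := ⌈(d * N : ℝ)⌉₊) fun n => ?_
    rcases le_total N n with hNn | hnN
    · exact (hN n hNn).trans (by simp)
    · calc (d * n : ℝ) ≤ d * N := by gcongr
        _ ≤ ⌈(d * N : ℝ)⌉₊ := Nat.le_ceil _
        _ ≤ _ := by simp

/-- For every `δ ∈ [1/2, 1]` there are sets of Hausdorff dimension `δ` such that the binary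
Gale–Stewart game with that target set is, respectively, non-determined, won by Player I,
and won by Player II. -/
theorem exists_sets_of_dimH_with_all_game_outcomes (δ : ℝ) (hδ : δ ∈ Set.Icc (1 / 2 : ℝ) 1) :
    ∃ W WI WII : Set (ℕ → Bool),
      dimH W = ENNReal.ofReal δ ∧ dimH WI = ENNReal.ofReal δ ∧ dimH WII = ENNReal.ofReal δ ∧
      (¬ ∃ sI : List Bool → Bool, ∀ x : ℕ → Bool, ConsistentI sI x → x ∈ W) ∧
      (¬ ∃ sII : List Bool → Bool, ∀ x : ℕ → Bool, ConsistentII sII x → x ∉ W) ∧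
      (∃ sI : List Bool → Bool, ∀ x : ℕ → Bool, ConsistentI sI x → x ∈ WI) ∧
      (∃ sII : List Bool → Bool, ∀ x : ℕ → Bool, ConsistentII sII x → x ∉ WII) := by
  obtain ⟨A, hA, hodd, heven⟩ := exists_hasDensity_odd_mem hδ
  have hdim : dimH (supportedIn A) = ENNReal.ofReal δ := hA.dimH_supportedIn
  have hdim' : dimH (supportedIn (A \ {1})) = ENNReal.ofReal δ :=
    (hA.diff_finite (finite_singleton 1)).dimH_supportedIn
  have hI (sI) : 𝔠 ≤ #{x | ConsistentI sI x ∧ x ∉ supportedIn (A \ {1})} :=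
    (continuum_le_mk_consistentI sI odd_one true).trans <| Cardinal.mk_le_mk_of_subset
      fun x ⟨hx, hx1⟩ => ⟨hx, fun hxA => by simp [hxA 1 (by simp)] at hx1⟩
  obtain ⟨W, hLW, hWU, hWI, hWII⟩ := exists_undetermined_between
    (supportedIn_mono sdiff_subset) hI fun sII => continuum_le_mk_consistentII sII hodd heven
  exact ⟨W, supportedIn A, supportedIn (A \ {1}),
    le_antisymm (hdim ▸ dimH_mono hWU) (hdim' ▸ dimH_mono hLW), hdim, hdim', hWI, hWII,
    playerIWins_supportedIn hodd, playerIIWins_supportedIn odd_one (by simp)⟩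
end

section
/- Let S ⊆ [0,1] with dim_H(S) < 1/2, the Hausdorff dimension taken with respect to the Euclidean metric on ℝ. Then Player II has a winning strategy in the dyadic intervals intersection game with target set S: there exists a function s_II assigning a bit to every finite binary sequence of odd length such that for every play x : ℕ → {0,1} consistent with s_II, the point Σ_{n∈ℕ} x(n)·2^(−(n+1)) does not belong to S. -/
open Set Filter
open scoped ENNReal

/-!
Cover `S` by sets `tᵢ` of diameter at most `4 ^ (-mᵢ)`, where `∑ 2 ^ (-mᵢ)` is small; this is
possible because `S` is a null set for the `1/2`-dimensional Hausdorff measure. A point of `tᵢ` has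
one of at most three initial words of length `2 * mᵢ`, so Player II only has to avoid these words.
Give each of them the mass `2 ^ (-mᵢ)`, and let Player II always move to the half where the total
mass of the words that are still possible is smaller. In `2 * mᵢ` stages Player II moves `mᵢ` times,
halving the remaining mass each time. Since the total mass is less than `1`, the mass remaining then
is less than `2 ^ (-mᵢ)`, and a word of that mass cannot have been reached.
-/

open MeasureTheory

namespace DyadicGame

section Plays

variable {α β : Type*}

/-- The word formed by the first `n` moves of a play; this is the position at stage `n`. -/
def playPrefix (x : ℕ → α) (n : ℕ) : List α := List.ofFn fun i : Fin n => x i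

@[simp] lemma playPrefix_zero (x : ℕ → α) : playPrefix x 0 = [] := rfl

lemma playPrefix_succ (x : ℕ → α) (n : ℕ) : playPrefix x (n + 1) = playPrefix x n ++ [x n] :=
  List.ofFn_succ_last

@[simp] lemma length_playPrefix (x : ℕ → α) (n : ℕ) : (playPrefix x n).length = n :=
  List.length_ofFn

lemma playPrefix_comp (f : α → β) (x : ℕ → α) (n : ℕ) :
    playPrefix (f ∘ x) n = (playPrefix x n).map f :=
  (List.map_ofFn ..).symm

/-- The play `x` is consistent with the strategy `s` of Player II, who moves at odd stages. -/
def IsConsistent (s : List α → α) (x : ℕ → α) : Prop :=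
  ∀ n, Odd n → x n = s (playPrefix x n)

end Plays

section Semimeasure

variable {M : Type*}

/-- A semimeasure on binary words, as in algorithmic randomness but without the normalization
`Φ [] ≤ 1`: the mass of a word is at least the total mass of its two one-bit extensions. -/
def IsSemimeasure [Add M] [LE M] (Φ : List Bool → M) : Prop :=
  ∀ s, Φ (s ++ [true]) + Φ (s ++ [false]) ≤ Φ s

lemma IsSemimeasure.append_le [AddCommMonoid M] [Preorder M] [CanonicallyOrderedAdd M]
    {Φ : List Bool → M} (hΦ : IsSemimeasure Φ) (s : List Bool) (b : Bool) :
    Φ (s ++ [b]) ≤ Φ s := by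
  cases b
  · exact le_add_self.trans (hΦ s)
  · exact le_self_add.trans (hΦ s)

end Semimeasure

section Greedy

variable {R : Type*} [LinearOrder R]

/-- The strategy that always moves to the half of smaller mass; ties go to the right half. -/
def greedy (Φ : List Bool → R) (s : List Bool) : Bool :=
  decide (Φ (s ++ [true]) ≤ Φ (s ++ [false]))

lemma apply_append_greedy (Φ : List Bool → R) (s : List Bool) :
    Φ (s ++ [greedy Φ s]) = min (Φ (s ++ [true])) (Φ (s ++ [false])) := by
  by_cases h : Φ (s ++ [true]) ≤ Φ (s ++ [false])
  · simp [greedy, h]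
  · simp [greedy, h, (not_le.mp h).le]

variable [Semiring R] [IsOrderedRing R] {Φ : List Bool → R}

lemma IsSemimeasure.two_mul_append_greedy_le (hΦ : IsSemimeasure Φ) (s : List Bool) :
    2 * Φ (s ++ [greedy Φ s]) ≤ Φ s := by
  rw [apply_append_greedy Φ, two_mul]
  exact (add_le_add (min_le_left _ _) (min_le_right _ _)).trans (hΦ s)

theorem IsSemimeasure.two_pow_mul_playPrefix_le [CanonicallyOrderedAdd R]
    (hΦ : IsSemimeasure Φ) {x : ℕ → Bool} (hx : IsConsistent (greedy Φ) x) (n : ℕ) :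
    2 ^ (n / 2) * Φ (playPrefix x n) ≤ Φ [] := by
  induction n with
  | zero => simp
  | succ n ih =>
    refine le_trans ?_ ih
    rw [playPrefix_succ]
    rcases Nat.even_or_odd n with hn | hn
    · rw [Nat.succ_div_of_not_dvd (by grind)]
      gcongr
      exact hΦ.append_le _ _
    · rw [Nat.succ_div_of_dvd (by grind), pow_succ, mul_assoc, hx n hn]
      gcongr
      exact hΦ.two_mul_append_greedy_le _

end Greedy

section ForbiddenWords

variable {ι : Type*} {w : ι → List Bool} {c : ι → ℝ≥0∞}

/-- The total mass of the words `w i` extending `s`, where `w i` has mass `c i`. -/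
noncomputable def massAbove (w : ι → List Bool) (c : ι → ℝ≥0∞) (s : List Bool) : ℝ≥0∞ :=
  ∑' i : {i | s <+: w i}, c i

lemma massAbove_nil : massAbove w c [] = ∑' i, c i :=
  (tsum_congr_set_coe c (by ext; simp)).trans (tsum_univ c)

lemma le_massAbove (i : ι) : c i ≤ massAbove w c (w i) :=
  ENNReal.le_tsum (f := fun j : {j | w i <+: w j} => c j) ⟨i, List.prefix_rfl⟩

lemma disjoint_setOf_append_prefix (w : ι → List Bool) (s : List Bool) :
    Disjoint {i | s ++ [true] <+: w i} {i | s ++ [false] <+: w i} := by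
  refine disjoint_left.mpr fun i htrue hfalse => ?_
  simpa using List.prefix_of_prefix_length_le htrue hfalse (by simp)

lemma isSemimeasure_massAbove : IsSemimeasure (massAbove w c) := fun s => by
  rw [massAbove, massAbove, ← ENNReal.summable.tsum_union_disjoint
    (disjoint_setOf_append_prefix w s) ENNReal.summable]
  refine ENNReal.tsum_mono_subtype c (union_subset ?_ ?_) <;>
    exact fun i hi => (List.prefix_append s _).trans hi

theorem exists_strategy_avoiding_words (hw : ∑' i, 2⁻¹ ^ ((w i).length / 2) < (1 : ℝ≥0∞)) :
    ∃ s : List Bool → Bool, ∀ x, IsConsistent s x → ∀ n i, playPrefix x n ≠ w i := by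
  set c : ι → ℝ≥0∞ := fun i => 2⁻¹ ^ ((w i).length / 2)
  refine ⟨greedy (massAbove w c), fun x hx n i hi => ?_⟩
  have hlen : n = (w i).length := by rw [← hi, length_playPrefix]
  have hone : 2 ^ (n / 2) * c i = 1 := by
    rw [hlen, ← mul_pow, ENNReal.mul_inv_cancel two_ne_zero ENNReal.ofNat_ne_top, one_pow]
  refine hw.not_ge ?_
  calc 1 = 2 ^ (n / 2) * c i := hone.symm
    _ ≤ 2 ^ (n / 2) * massAbove w c (playPrefix x n) := by
      rw [hi]
      gcongr
      exact le_massAbove i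
    _ ≤ massAbove w c [] := isSemimeasure_massAbove.two_pow_mul_playPrefix_le hx n
    _ = ∑' i, c i := massAbove_nil

theorem exists_strategy_avoiding_sets {W : ι → Set (List Bool)} {l : ι → ℕ}
    (hlen : ∀ i, ∀ u ∈ W i, u.length = l i)
    (hW : ∑' i, ((W i).encard : ℝ≥0∞) * 2⁻¹ ^ (l i / 2) < 1) :
    ∃ s : List Bool → Bool, ∀ x, IsConsistent s x → ∀ n i, playPrefix x n ∉ W i := by
  have hmass : ∑' p : Σ i, W i, 2⁻¹ ^ (p.2.1.length / 2) < (1 : ℝ≥0∞) := by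
    rw [ENNReal.tsum_sigma']
    refine (tsum_congr fun i => ?_).trans_lt hW
    rw [tsum_congr fun u : W i => by rw [hlen i u u.2], ENNReal.tsum_const]
    rfl
  obtain ⟨s, hs⟩ := exists_strategy_avoiding_words hmass
  exact ⟨s, fun x hx n i hn => hs x hx n ⟨i, _, hn⟩ rfl⟩

end ForbiddenWords

section Digits

variable {b : ℕ}

/-- The natural number with base-`b` digits `u`, most significant digit first. -/
def wordValue (u : List (Fin b)) : ℕ := Nat.ofDigits b (u.map Fin.val).reverse

lemma wordValue_append_singleton (u : List (Fin b)) (d : Fin b) :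
    wordValue (u ++ [d]) = d + b * wordValue u := by
  simp [wordValue, Nat.ofDigits_cons]

lemma injOn_wordValue (hb : 1 < b) (n : ℕ) : InjOn wordValue {u : List (Fin b) | u.length = n} := by
  intro u (hu : u.length = n) v (hv : v.length = n) huv
  have hdigit : ∀ u : List (Fin b), ∀ l ∈ (u.map Fin.val).reverse, l < b := by simp
  have hrev := Nat.ofDigits_inj_of_len_eq hb (by simp [hu, hv]) (hdigit u) (hdigit v) huv
  exact List.map_injective_iff.mpr Fin.val_injective (List.reverse_injective hrev)

lemma pow_mul_sum_ofDigitsTerm (a : ℕ → Fin b) (n : ℕ) :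
    (b : ℝ) ^ n * ∑ i ∈ Finset.range n, Real.ofDigitsTerm a i = wordValue (playPrefix a n) := by
  have hb : (b : ℝ) ≠ 0 := Nat.cast_ne_zero.mpr (Fin.pos (a 0)).ne'
  induction n with
  | zero => simp [wordValue]
  | succ n ih =>
    rw [Finset.sum_range_succ, playPrefix_succ, wordValue_append_singleton]
    push_cast
    rw [← ih, Real.ofDigitsTerm]
    field_simp
    ring

lemma pow_mul_ofDigits_mem_Icc (a : ℕ → Fin b) (n : ℕ) :
    (b : ℝ) ^ n * Real.ofDigits a ∈
      Icc (wordValue (playPrefix a n) : ℝ) (wordValue (playPrefix a n) + 1) := by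
  have hb : (b : ℝ) ≠ 0 := Nat.cast_ne_zero.mpr (Fin.pos (a 0)).ne'
  rw [Real.ofDigits_eq_sum_add_ofDigits a n, mul_add, pow_mul_sum_ofDigitsTerm,
    mul_inv_cancel_left₀ (pow_ne_zero n hb)]
  constructor
  · linarith [Real.ofDigits_nonneg fun i => a (i + n)]
  · linarith [Real.ofDigits_le_one fun i => a (i + n)]

lemma wordValue_le_add_two {a a' : ℕ → Fin b} {n : ℕ}
    (h : edist (Real.ofDigits a) (Real.ofDigits a') ≤ (b : ℝ≥0∞)⁻¹ ^ n) :
    wordValue (playPrefix a n) ≤ wordValue (playPrefix a' n) + 2 := by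
  have hb : (0 : ℝ) < b := Nat.cast_pos.mpr (Fin.pos (a 0))
  have hclose : Real.ofDigits a - Real.ofDigits a' ≤ ((b : ℝ) ^ n)⁻¹ := by
    refine (le_abs_self _).trans ?_
    have hreal := ENNReal.toReal_mono (by simp [(Nat.cast_pos.mp hb).ne']) h
    simpa [edist_dist, Real.dist_eq] using hreal
  have hscaled : (b : ℝ) ^ n * Real.ofDigits a - b ^ n * Real.ofDigits a' ≤ 1 := by
    rw [← mul_sub, ← mul_inv_cancel₀ (pow_pos hb n).ne']
    gcongr
  have hle := (pow_mul_ofDigits_mem_Icc a n).1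
  have hge := (pow_mul_ofDigits_mem_Icc a' n).2
  exact_mod_cast (by linarith : (wordValue (playPrefix a n) : ℝ) ≤ wordValue (playPrefix a' n) + 2)

lemma encard_le_add_one_of_forall_le_add {A : Set ℕ} {k : ℕ}
    (h : ∀ p ∈ A, ∀ q ∈ A, p ≤ q + k) : A.encard ≤ k + 1 := by
  rcases A.eq_empty_or_nonempty with rfl | hA
  · simp
  · have hsub : A ⊆ Finset.Icc (sInf A) (sInf A + k) := fun p hp =>
      Finset.mem_coe.mpr <| Finset.mem_Icc.mpr ⟨Nat.sInf_le hp, h p hp _ (Nat.sInf_mem hA)⟩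
    refine (encard_le_encard hsub).trans_eq ?_
    rw [encard_coe_eq_coe_finsetCard, Nat.card_Icc]
    norm_cast
    omega

theorem encard_playPrefix_image_ofDigits_preimage_le (hb : 1 < b) {t : Set ℝ} {n : ℕ}
    (ht : Metric.ediam t ≤ (b : ℝ≥0∞)⁻¹ ^ n) :
    ((playPrefix · n) '' (Real.ofDigits (b := b) ⁻¹' t)).encard ≤ 3 := by
  have hinj : InjOn wordValue ((playPrefix · n) '' (Real.ofDigits (b := b) ⁻¹' t)) :=
    (injOn_wordValue hb n).mono (by rintro _ ⟨a, -, rfl⟩; exact length_playPrefix a n)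
  rw [← hinj.encard_image]
  refine encard_le_add_one_of_forall_le_add (k := 2) ?_
  rintro _ ⟨_, ⟨a, ha, rfl⟩, rfl⟩ _ ⟨_, ⟨a', ha', rfl⟩, rfl⟩
  exact wordValue_le_add_two ((Metric.edist_le_ediam_of_mem (s := t) ha ha').trans ht)

end Digits

/-- The point to which a play of the dyadic intervals game converges. -/
noncomputable def limitPoint (x : ℕ → Bool) : ℝ := ∑' n : ℕ, ((x n).toNat : ℝ) / 2 ^ (n + 1)

lemma limitPoint_eq_ofDigits (x : ℕ → Bool) :
    limitPoint x = Real.ofDigits (finTwoEquiv.symm ∘ x) := by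
  have hbit : ∀ b : Bool, (finTwoEquiv.symm b).val = b.toNat := by decide
  simp [limitPoint, Real.ofDigits, Real.ofDigitsTerm, hbit, div_eq_mul_inv]

lemma encard_playPrefix_image_limitPoint_preimage_le {t : Set ℝ} {n : ℕ}
    (ht : Metric.ediam t ≤ 2⁻¹ ^ n) :
    ((playPrefix · n) '' (limitPoint ⁻¹' t)).encard ≤ 3 := by
  rw [← (List.map_injective_iff.mpr finTwoEquiv.symm.injective).encard_image]
  refine (encard_le_encard ?_).trans
    (encard_playPrefix_image_ofDigits_preimage_le one_lt_two (by exact_mod_cast ht))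
  rintro _ ⟨_, ⟨x, hx, rfl⟩, rfl⟩
  rw [mem_preimage, limitPoint_eq_ofDigits] at hx
  exact ⟨_, hx, playPrefix_comp ..⟩

section Covers

variable {X : Type*} [EMetricSpace X] [MeasurableSpace X] [BorelSpace X] {S : Set X} {d : ℝ}
  {ε : ℝ≥0∞}

lemma exists_cover_tsum_lt_of_hausdorffMeasure_eq_zero (hd : 0 < d) (hS : μH[d] S = 0)
    (hε : ε ≠ 0) :
    ∃ (t : ℕ → Set X) (ρ : ℕ → ℝ≥0∞), S ⊆ ⋃ i, t i ∧
      (∀ i, 0 < ρ i ∧ Metric.ediam (t i) ^ d ≤ ρ i) ∧ ∑' i, ρ i < ε := by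
  have hε2 : ε / 2 ≠ 0 := (ENNReal.half_pos hε).ne'
  rw [Measure.hausdorffMeasure_apply] at hS
  have hcover := (iSup₂_le_iff.mp hS.le 1 one_pos).trans_lt (pos_iff_ne_zero.mpr hε2)
  simp only [iInf_lt_iff] at hcover
  obtain ⟨t, hSt, -, hsum⟩ := hcover
  have hterm : ∀ i, ⨆ _ : (t i).Nonempty, Metric.ediam (t i) ^ d = Metric.ediam (t i) ^ d := by
    intro i
    rcases (t i).eq_empty_or_nonempty with hi | hi <;> simp [hi, hd]
  simp only [hterm] at hsum
  obtain ⟨δ, hδ, hδsum⟩ := ENNReal.exists_pos_sum_of_countable' hε2 ℕ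
  refine ⟨t, fun i => Metric.ediam (t i) ^ d + δ i, hSt,
    fun i => ⟨(hδ i).trans_le le_add_self, le_self_add⟩, ?_⟩
  rw [ENNReal.tsum_add, ← ENNReal.add_halves ε]
  exact ENNReal.add_lt_add hsum hδsum

lemma exists_pow_near_of_lt_one {r ρ : ℝ≥0∞} (hr₀ : 0 < r) (hr₁ : r < 1) (hρ₀ : 0 < ρ)
    (hρ₁ : ρ ≤ 1) : ∃ m : ℕ, r ^ (m + 1) < ρ ∧ ρ ≤ r ^ m := by
  lift r to NNReal using hr₁.ne_top
  lift ρ to NNReal using ne_top_of_le_ne_top ENNReal.one_ne_top hρ₁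
  norm_cast at *
  exact exists_nat_pow_near_of_lt_one hρ₀ hρ₁ hr₀ hr₁

theorem exists_cover_pow_of_hausdorffMeasure_eq_zero (hd : 0 < d) (hS : μH[d] S = 0)
    {r : ℝ≥0∞} (hr₀ : 0 < r) (hr₁ : r < 1) (hε : ε ≠ 0) :
    ∃ (t : ℕ → Set X) (m : ℕ → ℕ), S ⊆ ⋃ i, t i ∧
      (∀ i, Metric.ediam (t i) ^ d ≤ r ^ m i) ∧ ∑' i, r ^ m i < ε := by
  obtain ⟨t, ρ, hSt, hρ, hsum⟩ := exists_cover_tsum_lt_of_hausdorffMeasure_eq_zero hd hS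
    (ε := min (r * ε) 1) (by simp [hr₀.ne', hε])
  rw [lt_min_iff] at hsum
  choose m hmlt hmle using fun i =>
    exists_pow_near_of_lt_one hr₀ hr₁ (hρ i).1 ((ENNReal.le_tsum i).trans hsum.2.le)
  refine ⟨t, m, hSt, fun i => (hρ i).2.trans (hmle i), ?_⟩
  have hscaled : r * ∑' i, r ^ m i < r * ε := by
    rw [← ENNReal.tsum_mul_left]
    refine (ENNReal.tsum_le_tsum fun i => ?_).trans_lt hsum.1
    rw [← pow_succ']
    exact (hmlt i).le
  exact lt_of_mul_lt_mul_left' hscaled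

end Covers

theorem exists_wordCover_of_hausdorffMeasure_eq_zero {S : Set ℝ} (hS : μH[1 / 2] S = 0)
    {ε : ℝ≥0∞} (hε : ε ≠ 0) :
    ∃ (W : ℕ → Set (List Bool)) (l : ℕ → ℕ), (∀ i, ∀ u ∈ W i, u.length = l i) ∧
      (∀ x, limitPoint x ∈ S → ∃ n i, playPrefix x n ∈ W i) ∧
      ∑' i, ((W i).encard : ℝ≥0∞) * 2⁻¹ ^ (l i / 2) < ε := by
  obtain ⟨t, m, hSt, hdiam, hsum⟩ := exists_cover_pow_of_hausdorffMeasure_eq_zero one_half_pos hS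
    (r := 2⁻¹) (ε := ε / 3) (by simp) (by simp) (by simp [hε])
  let W (i : ℕ) : Set (List Bool) := (playPrefix · (2 * m i)) '' (limitPoint ⁻¹' t i)
  have hcard (i) : (W i).encard ≤ 3 := by
    refine encard_playPrefix_image_limitPoint_preimage_le ?_
    rw [mul_comm, pow_mul, ← ENNReal.rpow_two, ← ENNReal.rpow_inv_le_iff two_pos, ← one_div]
    exact hdiam i
  refine ⟨W, fun i => 2 * m i, fun i => ?_, fun x hx => ?_, ?_⟩
  · rintro _ ⟨x, -, rfl⟩
    exact length_playPrefix x _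
  · obtain ⟨i, hi⟩ := mem_iUnion.mp (hSt hx)
    exact ⟨2 * m i, i, x, hi, rfl⟩
  · simp only [Nat.mul_div_cancel_left _ two_pos]
    calc ∑' i, ((W i).encard : ℝ≥0∞) * 2⁻¹ ^ m i
      _ ≤ ∑' i, 3 * 2⁻¹ ^ m i := by
        gcongr with i
        exact_mod_cast hcard i
      _ = 3 * ∑' i, 2⁻¹ ^ m i := ENNReal.tsum_mul_left
      _ < 3 * (ε / 3) := (ENNReal.mul_lt_mul_iff_right (by simp) (by simp)).mpr hsum
      _ = ε := ENNReal.mul_div_cancel (by simp) (by simp)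

end DyadicGame

open DyadicGame

theorem playerII_wins_dyadic_intervals_game_general (S : Set ℝ) (hS : μH[1 / 2] S = 0) :
    ∃ sII : List Bool → Bool, ∀ x : ℕ → Bool,
      (∀ n : ℕ, Odd n → x n = sII (List.ofFn fun i : Fin n => x i)) →
      (∑' n : ℕ, ((x n).toNat : ℝ) / 2 ^ (n + 1)) ∉ S := by
  obtain ⟨W, l, hlen, hcover, hmass⟩ := exists_wordCover_of_hausdorffMeasure_eq_zero hS one_ne_zero
  obtain ⟨sII, hsII⟩ := exists_strategy_avoiding_sets hlen hmass
  refine ⟨sII, fun x hx hxS => ?_⟩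
  obtain ⟨n, i, hn⟩ := hcover x hxS
  exact hsII x hx n i hn

/-- If `S ⊆ [0,1]` has Hausdorff dimension `< 1/2` (for the Euclidean metric on `ℝ`), then
Player II has a winning strategy in the dyadic intervals intersection game with target `S`:
identifying the choice of the left/right half with the bits `0`/`1`, there is a strategy
`sII` for the odd stages such that every consistent play `x` produces a point
`Σ x(n)·2^{-(n+1)}` outside `S`. -/
theorem playerII_wins_dyadic_intervals_game (S : Set ℝ) (hS : S ⊆ Set.Icc (0 : ℝ) 1)
    (hdim : dimH S < 1 / 2) :
    ∃ sII : List Bool → Bool, ∀ x : ℕ → Bool,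
      (∀ n : ℕ, Odd n → x n = sII (List.ofFn fun i : Fin n => x i)) →
      (∑' n : ℕ, ((x n).toNat : ℝ) / 2 ^ (n + 1)) ∉ S :=
  playerII_wins_dyadic_intervals_game_general S <| by
    simpa using hausdorffMeasure_of_dimH_lt (d := 1 / 2) (by simpa using hdim)
end

section
/- Fix integers m ≥ 2 and d ≥ 1 and let S ⊆ ℝ^d with dim_H(S) < d/2, the Hausdorff dimension taken with respect to the Euclidean metric. Then Player II has a winning strategy in the m-adic cubes intersection game with target set S. -/
open Set
open scoped ENNReal

/-- The half-open `m`-adic cube `Q(ℓ,b) = m^(-ℓ)·([0,1)^d + b)` of level `ℓ`. -/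
def madicCube (m : ℕ) (d : ℕ) (ℓ : ℤ) (b : Fin d → ℤ) : Set (EuclideanSpace ℝ (Fin d)) :=
  {x : EuclideanSpace ℝ (Fin d) |
    ∀ j : Fin d, x j ∈ Set.Ico ((m : ℝ) ^ (-ℓ) * b j) ((m : ℝ) ^ (-ℓ) * (b j + 1))}

/-- The closed `m`-adic cube `Q̄(ℓ,b) = m^(-ℓ)·([0,1]^d + b)`. -/
def madicClosedCube (m : ℕ) (d : ℕ) (ℓ : ℤ) (b : Fin d → ℤ) : Set (EuclideanSpace ℝ (Fin d)) :=
  {x : EuclideanSpace ℝ (Fin d) |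
    ∀ j : Fin d, x j ∈ Set.Icc ((m : ℝ) ^ (-ℓ) * b j) ((m : ℝ) ^ (-ℓ) * (b j + 1))}

/-- The cube chosen at stage `k` (of level `L + k + 1`) is contained in the previously
chosen cube, where `(L, binit)` is Player II's initial choice. -/
def CubeAdmAt (m d : ℕ) (L : ℤ) (binit : Fin d → ℤ) (b : ℕ → Fin d → ℤ) (k : ℕ) : Prop :=
  madicCube m d (L + k + 1) (b k) ⊆
    if k = 0 then madicCube m d L binit else madicCube m d (L + k) (b (k - 1))

/-- The play `b` is admissible before stage `n`. -/
def CubeAdmUpTo (m d : ℕ) (L : ℤ) (binit : Fin d → ℤ) (b : ℕ → Fin d → ℤ) (n : ℕ) : Prop :=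
  ∀ k < n, CubeAdmAt m d L binit b k

/-!
Cover `S` by balls `B(cᵢ, rᵢ)` with `∑ rᵢ^(d/2)` small and spread mass proportional to `rᵢ^(d/2)`
uniformly over `B(cᵢ, 2rᵢ)`. The resulting measure `μ` has arbitrarily small total mass `ε`, yet
for every point of `S` there is a level `ℓ` at which each cube having that point in its closure has
mass at least `C m^(-ℓd/2)`, with `C` independent of `ε`. Player II always moves to a child of least
mass, which divides the mass by at least `m^d`; as this happens on every other move, the cube
reached at level `ℓ` has mass at most `ε C' m^(-ℓd/2)`, which is too little once `ε` is small.
-/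

open MeasureTheory Metric

section Covers

theorem exists_cover_tsum_ediam_rpow_lt {X : Type*} [EMetricSpace X] [MeasurableSpace X]
    [BorelSpace X] {S : Set X} {s : ℝ} (hs : 0 < s) {ε : ℝ≥0∞} (hS : μH[s] S < ε) :
    ∃ t : ℕ → Set X, S ⊆ ⋃ i, t i ∧ ∑' i, ediam (t i) ^ s < ε := by
  rw [Measure.hausdorffMeasure_apply] at hS
  have hS₁ := (le_iSup₂ (1 : ℝ≥0∞) one_pos).trans_lt hS
  simp only [iInf_lt_iff] at hS₁
  obtain ⟨t, hSt, -, ht⟩ := hS₁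
  refine ⟨t, hSt, lt_of_le_of_lt (ENNReal.tsum_le_tsum fun i => ?_) ht⟩
  rcases (t i).eq_empty_or_nonempty with hempty | hne
  · simp [hempty, hs]
  · simp [hne]

theorem exists_pos_le_ofReal_tsum_rpow_lt {ι : Type*} [Countable ι] {u : ι → ℝ≥0∞} {s : ℝ}
    (hs : 0 < s) {ε : ℝ≥0∞} (hu : ∑' i, u i ^ s < ε) :
    ∃ r : ι → ℝ, (∀ i, 0 < r i) ∧ (∀ i, u i ≤ ENNReal.ofReal (r i)) ∧
      ∑' i, ENNReal.ofReal (r i ^ s) < ε := by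
  -- The summands `η i` keep `r i` positive where `u i = 0`.
  obtain ⟨η, hη, hη_sum⟩ := ENNReal.exists_pos_sum_of_countable (tsub_pos_of_lt hu).ne' ι
  let v (i : ι) : ℝ≥0∞ := u i ^ s + η i
  have hv_sum : ∑' i, v i < ε := by
    rw [ENNReal.tsum_add, add_comm]
    exact lt_tsub_iff_right.1 hη_sum
  have hv_top (i : ι) : v i ≠ ∞ := ((ENNReal.le_tsum i).trans_lt hv_sum).ne_top
  have hv_pos (i : ι) : 0 < (v i).toReal :=
    ENNReal.toReal_pos (by simp [v, (hη i).ne']) (hv_top i)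
  have hv_rpow (i : ι) : ENNReal.ofReal (((v i).toReal ^ s⁻¹) ^ s) = v i := by
    rw [Real.rpow_inv_rpow (hv_pos i).le hs.ne', ENNReal.ofReal_toReal (hv_top i)]
  have hr_pos (i : ι) : 0 < (v i).toReal ^ s⁻¹ := Real.rpow_pos_of_pos (hv_pos i) _
  refine ⟨fun i => (v i).toReal ^ s⁻¹, hr_pos, fun i => ?_, by simpa only [hv_rpow] using hv_sum⟩
  rw [← ENNReal.rpow_le_rpow_iff hs, ENNReal.ofReal_rpow_of_pos (hr_pos i), hv_rpow]
  exact le_self_add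

theorem exists_closedBall_cover_of_hausdorffMeasure_eq_zero {X : Type*} [MetricSpace X]
    [MeasurableSpace X] [BorelSpace X] [Nonempty X] {S : Set X} {s : ℝ} (hs : 0 < s)
    (hS : μH[s] S = 0) {δ : ℝ} (hδ : 0 < δ) {ε : ℝ≥0∞} (hε : ε ≠ 0) :
    ∃ (c : ℕ → X) (r : ℕ → ℝ), (∀ i, r i ∈ Ioc 0 δ) ∧ S ⊆ ⋃ i, closedBall (c i) (r i) ∧
      ∑' i, ENNReal.ofReal (r i ^ s) ≤ ε := by
  have hmin : 0 < min ε (ENNReal.ofReal (δ ^ s)) :=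
    lt_min (pos_iff_ne_zero.2 hε) (ENNReal.ofReal_pos.2 (by positivity))
  obtain ⟨t, hSt, ht⟩ := exists_cover_tsum_ediam_rpow_lt hs (hS.trans_lt hmin)
  obtain ⟨r, hr_pos, htr, hr_sum⟩ := exists_pos_le_ofReal_tsum_rpow_lt hs ht
  have hr_le (i : ℕ) : r i ≤ δ := by
    rw [← Real.rpow_le_rpow_iff (hr_pos i).le hδ.le hs,
      ← ENNReal.ofReal_le_ofReal_iff (by positivity)]
    exact (ENNReal.le_tsum i).trans (hr_sum.le.trans (min_le_right _ _))
  have hball (i : ℕ) : ∃ c, t i ⊆ closedBall c (r i) := by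
    rcases (t i).eq_empty_or_nonempty with hempty | ⟨c, hc⟩
    · exact ⟨Classical.arbitrary X, by simp [hempty]⟩
    refine ⟨c, fun x hx => ?_⟩
    rw [mem_closedBall, ← edist_le_ofReal (hr_pos i).le]
    exact (edist_le_ediam_of_mem hx hc).trans (htr i)
  choose c hc using hball
  exact ⟨c, r, fun i => ⟨hr_pos i, hr_le i⟩, hSt.trans (iUnion_mono hc),
    hr_sum.le.trans (min_le_left _ _)⟩

theorem exists_measure_ge_rpow_smul_restrict_closedBall {E : Type*} [NormedAddCommGroup E]
    [NormedSpace ℝ E] [FiniteDimensional ℝ E] [MeasurableSpace E] [BorelSpace E] (ν : Measure E)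
    [ν.IsAddHaarMeasure] {S : Set E} {s : ℝ} (hs : 0 < s) (hS : μH[s] S = 0) {δ : ℝ} (hδ : 0 < δ)
    {ε : ℝ≥0∞} (hε : ε ≠ 0) :
    ∃ μ : Measure E, μ univ ≤ ε ∧ ∀ x ∈ S, ∃ r ∈ Ioc 0 δ,
      ENNReal.ofReal (r ^ (s - Module.finrank ℝ E)) • ν.restrict (closedBall x r) ≤ μ := by
  set K := ν (closedBall 0 2)
  have hK : K ≠ ∞ := measure_closedBall_lt_top.ne
  obtain ⟨c, r, hr, hSc, hsum⟩ :=
    exists_closedBall_cover_of_hausdorffMeasure_eq_zero hs hS hδ (ENNReal.div_pos hε hK).ne'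
  let μ (i : ℕ) : Measure E :=
    ENNReal.ofReal (r i ^ (s - Module.finrank ℝ E)) • ν.restrict (closedBall (c i) (r i * 2))
  have hμ (i : ℕ) : μ i univ = ENNReal.ofReal (r i ^ s) * K := by
    have hri := (hr i).1
    rw [Measure.smul_apply, Measure.restrict_apply_univ, smul_eq_mul,
      Measure.addHaar_closedBall_mul ν _ hri.le zero_le_two, ← mul_assoc,
      ← ENNReal.ofReal_mul (by positivity), ← Real.rpow_natCast, ← Real.rpow_add hri,
      sub_add_cancel]
  refine ⟨Measure.sum μ, ?_, fun x hx => ?_⟩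
  · calc Measure.sum μ univ = (∑' i, ENNReal.ofReal (r i ^ s)) * K := by
          simp_rw [Measure.sum_apply _ MeasurableSet.univ, hμ, ENNReal.tsum_mul_right]
      _ ≤ ε := ENNReal.mul_le_of_le_div hsum
  · obtain ⟨i, hi⟩ := mem_iUnion.1 (hSc hx)
    have hball : closedBall x (r i) ⊆ closedBall (c i) (r i * 2) :=
      closedBall_subset_closedBall' (by linarith [mem_closedBall.1 hi])
    refine ⟨r i, hr i, le_trans ?_ (Measure.le_sum μ i)⟩
    exact smul_mono_right _ (Measure.restrict_mono_set ν hball)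

end Covers

theorem exists_card_mul_measure_le {α ι : Type*} [MeasurableSpace α] [Fintype ι] [Nonempty ι]
    (μ : Measure α) {A : ι → Set α} (hA : ∀ i, MeasurableSet (A i))
    (hdisj : Pairwise (Function.onFun Disjoint A)) {B : Set α} (hAB : ∀ i, A i ⊆ B) :
    ∃ i, Fintype.card ι * μ (A i) ≤ μ B := by
  obtain ⟨i, -, hi⟩ := Finset.exists_min_image Finset.univ (μ <| A ·) Finset.univ_nonempty
  refine ⟨i, ?_⟩
  calc Fintype.card ι * μ (A i) ≤ ∑ j, μ (A j) := by
        simpa using Finset.card_nsmul_le_sum Finset.univ _ _ hi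
    _ ≤ μ (⋃ j, A j) := by
        simpa using tsum_meas_le_meas_iUnion_of_disjoint μ hA hdisj
    _ ≤ μ B := measure_mono (iUnion_subset hAB)

theorem pow_half_mul_le_of_antitone {R : Type*} [MonoidWithZero R] [Preorder R] [ZeroLEOneClass R]
    [PosMulMono R] {a : ℕ → R} {A : R} (hA : 0 ≤ A) (ha : Antitone a)
    (hodd : ∀ n, Odd n → A * a (n + 1) ≤ a n) (k : ℕ) : A ^ (k / 2) * a k ≤ a 0 := by
  induction k with
  | zero => simp
  | succ k ih =>
    refine le_trans ?_ ih
    rcases Nat.even_or_odd k with hk | hk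
    · rw [Nat.succ_div_of_not_dvd (by grind)]
      exact mul_le_mul_of_nonneg_left (ha k.le_succ) (pow_nonneg hA _)
    · rw [Nat.succ_div_of_dvd (by grind), pow_succ, mul_assoc]
      exact mul_le_mul_of_nonneg_left (hodd k hk) (pow_nonneg hA _)

section Cubes

variable {m d : ℕ} {ℓ : ℤ} {b : Fin d → ℤ}

theorem mem_madicCube_iff_floor (hm : 0 < m) {x : EuclideanSpace ℝ (Fin d)} :
    x ∈ madicCube m d ℓ b ↔ ∀ j, ⌊(m : ℝ) ^ ℓ * x j⌋ = b j := by
  have hpow : (0 : ℝ) < (m : ℝ) ^ ℓ := by positivity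
  simp only [madicCube, mem_ofPred_eq, mem_Ico, zpow_neg, inv_mul_le_iff₀ hpow,
    lt_inv_mul_iff₀ hpow, Int.floor_eq_iff]

theorem disjoint_madicCube (hm : 0 < m) {b' : Fin d → ℤ} (h : b ≠ b') :
    Disjoint (madicCube m d ℓ b) (madicCube m d ℓ b') := by
  refine disjoint_left.2 fun x hx hx' => h (funext fun j => ?_)
  rw [← (mem_madicCube_iff_floor hm).1 hx j, (mem_madicCube_iff_floor hm).1 hx' j]

theorem madicCube_child_subset (hm : 0 < m) (t : Fin d → Fin m) :
    madicCube m d (ℓ + 1) (fun j => m * b j + (t j : ℕ)) ⊆ madicCube m d ℓ b := by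
  have hm₀ : (m : ℝ) ≠ 0 := by positivity
  intro x hx
  rw [mem_madicCube_iff_floor hm] at hx ⊢
  intro j
  have ht : ((t j : ℕ) : ℤ) / m = 0 := Int.ediv_eq_zero_of_lt (by positivity) (mod_cast (t j).isLt)
  calc ⌊(m : ℝ) ^ ℓ * x j⌋ = ⌊(m : ℝ) ^ (ℓ + 1) * x j / m⌋ := by
        rw [zpow_add_one₀ hm₀]
        field_simp
    _ = (m * b j + (t j : ℕ)) / m := by rw [Int.floor_div_natCast, hx j]
    _ = b j := by rw [Int.mul_add_ediv_left _ _ (by positivity), ht, add_zero]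

theorem madicCube_eq_preimage (m : ℕ) (ℓ : ℤ) (b : Fin d → ℤ) :
    madicCube m d ℓ b = WithLp.ofLp ⁻¹'
      univ.pi fun j => Ico ((m : ℝ) ^ (-ℓ) * b j) ((m : ℝ) ^ (-ℓ) * (b j + 1)) := by
  ext x
  simp [madicCube]

theorem measurableSet_madicCube (m : ℕ) (ℓ : ℤ) (b : Fin d → ℤ) :
    MeasurableSet (madicCube m d ℓ b) := by
  rw [madicCube_eq_preimage]
  exact (PiLp.volume_preserving_ofLp (Fin d)).measurable
    (MeasurableSet.univ_pi fun _ => measurableSet_Ico)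

theorem volume_madicCube (m : ℕ) (ℓ : ℤ) (b : Fin d → ℤ) :
    volume (madicCube m d ℓ b) = ENNReal.ofReal (((m : ℝ) ^ (-ℓ)) ^ d) := by
  rw [madicCube_eq_preimage, (PiLp.volume_preserving_ofLp (Fin d)).measure_preimage
    (MeasurableSet.univ_pi fun _ => measurableSet_Ico).nullMeasurableSet,
    Real.volume_pi_Ico, ENNReal.ofReal_pow (by positivity)]
  simp [mul_add]

theorem closure_madicCube (hm : 0 < m) (ℓ : ℤ) (b : Fin d → ℤ) :
    closure (madicCube m d ℓ b) = madicClosedCube m d ℓ b := by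
  have hne (j : Fin d) : (m : ℝ) ^ (-ℓ) * b j ≠ (m : ℝ) ^ (-ℓ) * (b j + 1) := by
    have : (0 : ℝ) < (m : ℝ) ^ (-ℓ) := by positivity
    linarith
  rw [madicCube_eq_preimage]
  refine ((PiLp.homeomorph 2 fun _ => ℝ).preimage_closure _).symm.trans ?_
  ext x
  simp only [closure_pi_set, closure_Ico (hne _)]
  exact mem_univ_pi

theorem dist_le_of_mem_madicClosedCube {x y : EuclideanSpace ℝ (Fin d)}
    (hx : x ∈ madicClosedCube m d ℓ b) (hy : y ∈ madicClosedCube m d ℓ b) :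
    dist x y ≤ √d * (m : ℝ) ^ (-ℓ) := by
  have hcoord (j : Fin d) : dist (x j) (y j) ≤ (m : ℝ) ^ (-ℓ) :=
    (Real.dist_le_of_mem_Icc (hx j) (hy j)).trans_eq (by ring)
  calc dist x y = √(∑ j, dist (x j) (y j) ^ 2) := EuclideanSpace.dist_eq x y
    _ ≤ √(∑ _j : Fin d, ((m : ℝ) ^ (-ℓ)) ^ 2) := by
        gcongr with j
        exact hcoord j
    _ = √d * (m : ℝ) ^ (-ℓ) := by
        rw [Finset.sum_const, Finset.card_univ, Fintype.card_fin, nsmul_eq_mul,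
          Real.sqrt_mul (by positivity), Real.sqrt_sq (by positivity)]

theorem madicCube_subset_closedBall (hm : 0 < m) {x : EuclideanSpace ℝ (Fin d)} {r : ℝ}
    (hx : x ∈ madicClosedCube m d ℓ b) (hr : √d * (m : ℝ) ^ (-ℓ) ≤ r) :
    madicCube m d ℓ b ⊆ closedBall x r := fun _ hy =>
  (dist_le_of_mem_madicClosedCube (closure_madicCube hm ℓ b ▸ subset_closure hy) hx).trans hr

theorem nonempty_iInter_madicClosedCube (hm : 0 < m) {ℓ : ℕ → ℤ} {b : ℕ → Fin d → ℤ}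
    (hanti : Antitone fun k => madicCube m d (ℓ k) (b k)) :
    (⋂ k, madicClosedCube m d (ℓ k) (b k)).Nonempty := by
  have hclosed (k : ℕ) : IsClosed (madicClosedCube m d (ℓ k) (b k)) :=
    closure_madicCube hm (ℓ k) (b k) ▸ isClosed_closure
  refine IsCompact.nonempty_iInter_of_sequence_nonempty_isCompact_isClosed _ (fun k => ?_)
    (fun k => ?_) ?_ hclosed
  · simpa only [closure_madicCube hm] using closure_mono (hanti k.le_succ)
  · refine ⟨WithLp.toLp 2 fun j => (m : ℝ) ^ (-ℓ k) * b k j, fun j => ⟨le_rfl, ?_⟩⟩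
    exact mul_le_mul_of_nonneg_left (by linarith) (by positivity)
  · exact isCompact_of_isClosed_isBounded (hclosed 0)
      (isBounded_iff.2 ⟨_, fun _ hx _ hy => dist_le_of_mem_madicClosedCube hx hy⟩)

theorem exists_madicCube_child_measure_le (hm : 0 < m) (μ : Measure (EuclideanSpace ℝ (Fin d)))
    (ℓ : ℤ) (b : Fin d → ℤ) :
    ∃ b', madicCube m d (ℓ + 1) b' ⊆ madicCube m d ℓ b ∧
      (m : ℝ≥0∞) ^ d * μ (madicCube m d (ℓ + 1) b') ≤ μ (madicCube m d ℓ b) := by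
  have : Nonempty (Fin m) := ⟨⟨0, hm⟩⟩
  let child (t : Fin d → Fin m) (j : Fin d) : ℤ := m * b j + (t j : ℕ)
  have hinj : Function.Injective child := fun t u htu => funext fun j => by
    simpa [child, Fin.val_inj] using congrFun htu j
  obtain ⟨t, ht⟩ := exists_card_mul_measure_le μ (A := fun t => madicCube m d (ℓ + 1) (child t))
    (fun t => measurableSet_madicCube m _ _) (fun t u htu => disjoint_madicCube hm (hinj.ne htu))
    (madicCube_child_subset hm)
  exact ⟨child t, madicCube_child_subset hm t, by simpa using ht⟩

end Cubes

theorem pow_mul_rpow_half_sub_mul_pow (d : ℕ) {a r q : ℝ} (ha : 0 ≤ a) (hr : 0 < r) (hq : 0 ≤ q) :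
    a ^ d * (r ^ ((d : ℝ) / 2 - d) * q ^ d) = (a ^ 2 * q ^ 2 / r) ^ ((d : ℝ) / 2) := by
  have hsq {y : ℝ} (hy : 0 ≤ y) : (y ^ 2) ^ ((d : ℝ) / 2) = y ^ d := by
    rw [← Real.rpow_natCast_mul hy, Nat.cast_ofNat, mul_div_cancel₀ _ two_ne_zero,
      Real.rpow_natCast]
  rw [Real.div_rpow (by positivity) hr.le, Real.mul_rpow (by positivity) (by positivity), hsq ha,
    hsq hq, show (d : ℝ) / 2 - d = -(d / 2) by ring, Real.rpow_neg hr.le]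
  ring

theorem exists_nat_mul_zpow_neg_near {a : ℝ} (ha : 1 < a) {L : ℤ} {ρ r : ℝ}
    (hr : r ∈ Ioc 0 (ρ * a ^ (-L))) :
    ∃ k : ℕ, ρ * a ^ (-(L + k)) ≤ r ∧ r ≤ ρ * a ^ (-(L + k)) * a := by
  have ha₀ : 0 < a := one_pos.trans ha
  have hρL : 0 < ρ * a ^ (-L) := hr.1.trans_le hr.2
  obtain ⟨n, hn, hn'⟩ := exists_nat_pow_near_of_lt_one (div_pos hr.1 hρL)
    ((div_le_one hρL).2 hr.2) (inv_pos.2 ha₀) (inv_lt_one_of_one_lt₀ ha)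
  rw [lt_div_iff₀' hρL, inv_pow] at hn
  rw [div_le_iff₀' hρL, inv_pow] at hn'
  have hlevel : ρ * a ^ (-(L + (n + 1 : ℕ))) = ρ * a ^ (-L) * (a ^ (n + 1))⁻¹ := by
    rw [neg_add, zpow_add₀ ha₀.ne', zpow_neg _ ((n + 1 : ℕ) : ℤ), zpow_natCast, mul_assoc]
  refine ⟨n + 1, hlevel.trans_le hn.le, hn'.trans_eq ?_⟩
  rw [hlevel, pow_succ]
  field_simp

theorem pow_le_mul_sq_pow_half {a : ℝ} (ha : 1 ≤ a) (k : ℕ) : a ^ k ≤ a * (a ^ (k / 2)) ^ 2 := by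
  rw [← pow_mul, ← pow_succ']
  exact pow_le_pow_right₀ ha (by omega)

theorem zpow_neg_div_le_sq_mul_sq_div {a : ℝ} (ha : 1 ≤ a) {L : ℤ} {ρ r : ℝ} (hρ : 0 < ρ)
    (hr : 0 < r) {k : ℕ} (hrk : r ≤ ρ * a ^ (-(L + k)) * a) :
    a ^ (-L) / (ρ * a ^ 2) ≤ (a ^ (k / 2)) ^ 2 * (a ^ (-(L + k))) ^ 2 / r := by
  have ha₀ : 0 < a := one_pos.trans_le ha
  have hL : a ^ (-L) = a ^ k * a ^ (-(L + k)) := by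
    rw [← zpow_natCast, ← zpow_add₀ ha₀.ne']
    congr 1
    ring
  set q := a ^ (-(L + k))
  have hq : 0 < q := by positivity
  calc a ^ (-L) / (ρ * a ^ 2) = a ^ k / a * q ^ 2 / (ρ * q * a) := by
        rw [hL]
        field_simp
    _ ≤ (a ^ (k / 2)) ^ 2 * q ^ 2 / r := by
        gcongr
        exact (div_le_iff₀' ha₀).2 (pow_le_mul_sq_pow_half ha k)

theorem exists_measure_madicCube_ge {m d : ℕ} (hm : 2 ≤ m) (hd : 0 < d)
    {S : Set (EuclideanSpace ℝ (Fin d))} (hS : μH[(d : ℝ) / 2] S = 0) (L : ℤ) :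
    ∃ (μ : Measure (EuclideanSpace ℝ (Fin d))) (c : ℝ≥0∞), μ univ < c ∧
      ∀ x ∈ S, ∃ k : ℕ, ∀ b, x ∈ madicClosedCube m d (L + k) b →
        c ≤ ((m : ℝ≥0∞) ^ d) ^ (k / 2) * μ (madicCube m d (L + k) b) := by
  have hm₀ : 0 < m := by positivity
  have hρ : 0 < √(d : ℝ) := by positivity
  set c := ENNReal.ofReal (((m : ℝ) ^ (-L) / (√d * m ^ 2)) ^ ((d : ℝ) / 2))
  have hc : 0 < c := ENNReal.ofReal_pos.2 (by positivity)
  obtain ⟨ε, hε₀, hεc⟩ := exists_between hc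
  obtain ⟨μ, hμ, hμS⟩ := exists_measure_ge_rpow_smul_restrict_closedBall volume (by positivity) hS
    (δ := √d * (m : ℝ) ^ (-L)) (by positivity) hε₀.ne'
  refine ⟨μ, c, hμ.trans_lt hεc, fun x hx => ?_⟩
  obtain ⟨r, hr, hrμ⟩ := hμS x hx
  obtain ⟨k, hkr, hrk⟩ := exists_nat_mul_zpow_neg_near (mod_cast hm : (1 : ℝ) < m) hr
  refine ⟨k, fun b hb => ?_⟩
  have hr₀ := hr.1
  set q := (m : ℝ) ^ (-(L + k))
  have hmass : ENNReal.ofReal (r ^ ((d : ℝ) / 2 - d) * q ^ d) ≤ μ (madicCube m d (L + k) b) := by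
    have h := hrμ (madicCube m d (L + k) b)
    rwa [Measure.smul_apply, Measure.restrict_eq_self _ (madicCube_subset_closedBall hm₀ hb hkr),
      volume_madicCube, finrank_euclideanSpace_fin, smul_eq_mul,
      ← ENNReal.ofReal_mul (by positivity)] at h
  calc c ≤ ENNReal.ofReal ((((m : ℝ) ^ (k / 2)) ^ 2 * q ^ 2 / r) ^ ((d : ℝ) / 2)) := by
        refine ENNReal.ofReal_le_ofReal (Real.rpow_le_rpow (by positivity) ?_ (by positivity))
        exact zpow_neg_div_le_sq_mul_sq_div (mod_cast hm₀) hρ hr₀ hrk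
    _ = ((m : ℝ≥0∞) ^ d) ^ (k / 2) * ENNReal.ofReal (r ^ ((d : ℝ) / 2 - d) * q ^ d) := by
        rw [← pow_mul_rpow_half_sub_mul_pow d (by positivity) hr₀ (by positivity),
          ENNReal.ofReal_mul (by positivity), pow_right_comm]
        simp [ENNReal.ofReal_pow]
    _ ≤ _ := by gcongr

section Strategies

variable {α : Type*}

/-- The sequence of positions of a play: the initial position `a₀`, followed by the moves `b`. The
move `b n` thus leads from position `n` to position `n + 1`. -/
def positions (a₀ : α) (b : ℕ → α) : ℕ → α
  | 0 => a₀
  | n + 1 => b n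

/-- The strategy, as a function of the list of past moves, that looks only at the length of that
list and at the current position; the default `a₀` is the position before the first move. -/
def positionalStrategy (a₀ : α) (next : ℕ → α → α) (history : List α) : α :=
  next history.length (history.getLastD a₀)

theorem positionalStrategy_ofFn (a₀ : α) (next : ℕ → α → α) (b : ℕ → α) (n : ℕ) :
    positionalStrategy a₀ next (List.ofFn fun i : Fin n => b i) = next n (positions a₀ b n) := by
  cases n with
  | zero => simp [positionalStrategy, positions]
  | succ n => simp [positionalStrategy, positions, List.ofFn_succ', -List.ofFn_succ]

end Strategies

section Game

variable {m d : ℕ} {L : ℤ} {binit : Fin d → ℤ} {b : ℕ → Fin d → ℤ}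

theorem cubeAdmAt_iff_positions {k : ℕ} :
    CubeAdmAt m d L binit b k ↔
      madicCube m d (L + k + 1) (b k) ⊆ madicCube m d (L + k) (positions binit b k) := by
  cases k <;> simp [CubeAdmAt, positions]

theorem antitone_madicCube_positions (hb : ∀ k, CubeAdmAt m d L binit b k) :
    Antitone fun k : ℕ => madicCube m d (L + k) (positions binit b k) :=
  antitone_nat_of_succ_le fun k => by
    simpa [positions, add_assoc] using cubeAdmAt_iff_positions.1 (hb k)

end Game

theorem playerII_wins_madic_cubes_game_general (m d : ℕ) (hm : 2 ≤ m) (hd : 1 ≤ d)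
    (S : Set (EuclideanSpace ℝ (Fin d))) (hS : μH[(d : ℝ) / 2] S = 0) (L : ℤ)
    (binit : Fin d → ℤ) :
    ∃ σ : List (Fin d → ℤ) → Fin d → ℤ,
      (∀ (b : ℕ → Fin d → ℤ) (n : ℕ), Odd n → CubeAdmUpTo m d L binit b n →
        madicCube m d (L + n + 1) (σ (List.ofFn fun i : Fin n => b i)) ⊆
          madicCube m d (L + n) (b (n - 1))) ∧
      ∀ b : ℕ → Fin d → ℤ, (∀ k : ℕ, CubeAdmAt m d L binit b k) →
        (∀ n : ℕ, Odd n → b n = σ (List.ofFn fun i : Fin n => b i)) →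
        ¬ (⋂ n : ℕ, madicClosedCube m d (L + n + 1) (b n)) ⊆ S := by
  have hm₀ : 0 < m := by omega
  obtain ⟨μ, c, hμ, hμS⟩ := exists_measure_madicCube_ge hm hd hS L
  choose child hchild_subset hchild_measure using
    fun n : ℕ => exists_madicCube_child_measure_le hm₀ μ (L + n)
  refine ⟨positionalStrategy binit child, fun b n hn _ => ?_, fun b hb hbσ hsub => ?_⟩
  · obtain ⟨k, rfl⟩ := hn
    rw [positionalStrategy_ofFn]
    exact hchild_subset _ (b (2 * k))
  have hanti := antitone_madicCube_positions hb
  have hodd (n : ℕ) (hn : Odd n) :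
      (m : ℝ≥0∞) ^ d * μ (madicCube m d (L + (n + 1 : ℕ)) (positions binit b (n + 1))) ≤
        μ (madicCube m d (L + n) (positions binit b n)) := by
    simpa [positions, hbσ n hn, positionalStrategy_ofFn, add_assoc] using
      hchild_measure n (positions binit b n)
  obtain ⟨x, hx⟩ := nonempty_iInter_madicClosedCube hm₀ hanti
  rw [mem_iInter] at hx
  have hxS : x ∈ S := hsub <| mem_iInter.2 fun n => by
    simpa [positions, add_assoc] using hx (n + 1)
  obtain ⟨k, hk⟩ := hμS x hxS
  have hdecay :=
    pow_half_mul_le_of_antitone zero_le (fun _ _ hij => measure_mono (hanti hij)) hodd k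
  exact ((hk _ (hx k)).trans hdecay).not_gt ((measure_mono (subset_univ _)).trans_lt hμ)

/-- If `S ⊆ ℝ^d` has Hausdorff dimension `< d/2` (Euclidean metric), then Player II has a
winning strategy in the `m`-adic cubes intersection game with target set `S`. -/
theorem playerII_wins_madic_cubes_game (m d : ℕ) (hm : 2 ≤ m) (hd : 1 ≤ d)
    (S : Set (EuclideanSpace ℝ (Fin d))) (hS : dimH S < (d : ℝ≥0∞) / 2) :
    ∃ (L : ℤ) (binit : Fin d → ℤ) (σ : List (Fin d → ℤ) → Fin d → ℤ),
      (∀ (b : ℕ → Fin d → ℤ) (n : ℕ), Odd n → CubeAdmUpTo m d L binit b n →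
        madicCube m d (L + n + 1) (σ (List.ofFn fun i : Fin n => b i)) ⊆
          madicCube m d (L + n) (b (n - 1))) ∧
      ∀ b : ℕ → Fin d → ℤ, (∀ k : ℕ, CubeAdmAt m d L binit b k) →
        (∀ n : ℕ, Odd n → b n = σ (List.ofFn fun i : Fin n => b i)) →
        ¬ (⋂ n : ℕ, madicClosedCube m d (L + n + 1) (b n)) ⊆ S := by
  have hS₀ : dimH S < ((d / 2 : NNReal) : ℝ≥0∞) := by simpa using hS
  exact ⟨0, 0, playerII_wins_madic_cubes_game_general m d hm hd S
    (by simpa using hausdorffMeasure_of_dimH_lt hS₀) 0 0⟩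
end
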